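/- Let I = [0,1), 0 < |λ| < 1, and f: I → I a piecewise λ-affine map: there are 0 = a₀ < a₁ < ⋯ < a_k = 1 and b₁,…,b_k ∈ ℝ with f(x) = λx + b_i on [a_{i−1}, a_i). For δ ∈ ℝ, let f_δ = R_δ ∘ f with R_δ(x) = {x + δ} (fractional part). Then the exceptional set E_f = {δ ∈ ℝ : f_δ is not asymptotically periodic} has Hausdorff dimension zero. -/

import Mathlib

open Filter Set Topology
open scoped NNReal

noncomputable def pcIdx {k : ℕ} (hk : 2 ≤ k) (a : Fin (k-1) → ℝ) (x : ℝ) : Fin k :=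
  ⟨(Finset.univ.filter fun i => a i ≤ x).card, by
    have h := Finset.card_filter_le (Finset.univ : Finset (Fin (k-1))) (fun i => a i ≤ x)
    simp only [Finset.card_univ, Fintype.card_fin] at h
    omega⟩

/-- The piecewise contraction `f_{Φ,a}` determined by the IFS `φ` and partition points `a`. -/
noncomputable def pc {k : ℕ} (hk : 2 ≤ k) (φ : Fin k → ℝ → ℝ) (a : Fin (k-1) → ℝ) (x : ℝ) : ℝ :=
  φ (pcIdx hk a x) x

/-- `φ_ω = φ_{ω_n} ∘ ⋯ ∘ φ_{ω_1}`. -/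
def wcomp {k : ℕ} (φ : Fin k → ℝ → ℝ) {n : ℕ} (ω : Fin n → Fin k) (x : ℝ) : ℝ :=
  (List.ofFn ω).foldl (fun y i => φ i y) x

/-- `(Φ,a)` has a singular connection: `φ_ω(S_a) ∩ S_a ≠ ∅` for some nonempty word `ω`. -/
def hasSingConn {k : ℕ} (φ : Fin k → ℝ → ℝ) (a : Fin (k-1) → ℝ) : Prop :=
  ∃ n : ℕ, ∃ ω : Fin (n+1) → Fin k, ∃ i j : Fin (k-1), wcomp φ ω (a i) = a j

/-- `max_i |z i|`. -/
noncomputable def maxAbs {k : ℕ} (hk : 2 ≤ k) (z : Fin k → ℝ) : ℝ :=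
  Finset.univ.sup' (Finset.univ_nonempty_iff.mpr ⟨⟨0, by omega⟩⟩) fun i => |z i|

/-- The set of itineraries of order `n` of `(Φ,a)`. -/
noncomputable def itin {k : ℕ} (hk : 2 ≤ k) (φ : Fin k → ℝ → ℝ) (a : Fin (k-1) → ℝ) (n : ℕ) :
    Set (Fin n → Fin k) :=
  {ω | ∃ x : ℝ, (∀ j < n, (pc hk φ a)^[j] x ∉ Set.range a) ∧
       ∀ j : Fin n, ω j = pcIdx hk a ((pc hk φ a)^[(j : ℕ)] x)}

/-- `I^{(n)}_{Φ,a}(ε) = ⋃_{|δ| ≤ ε} I^{(n)}_{Φ,a+δ}`. -/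
noncomputable def itinE {k : ℕ} (hk : 2 ≤ k) (φ : Fin k → ℝ → ℝ) (a : Fin (k-1) → ℝ)
    (ε : ℝ) (n : ℕ) : Set (Fin n → Fin k) :=
  {ω | ∃ δ : ℝ, |δ| ≤ ε ∧ ω ∈ itin hk φ (fun i => a i + δ) n}

/-- `Ω^ε_{Φ,a} = ⋂_{m ≥ 1} closure (⋃_{n ≥ m} ⋃_{ω ∈ I^{(n)}(ε)} {φ_ω(0)})`. -/
noncomputable def omegaSet {k : ℕ} (hk : 2 ≤ k) (φ : Fin k → ℝ → ℝ) (a : Fin (k-1) → ℝ)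
    (ε : ℝ) : Set ℝ :=
  ⋂ m : ℕ, closure {y : ℝ | ∃ n, m ≤ n ∧ ∃ ω ∈ itinE hk φ a ε n, wcomp φ ω 0 = y}

/-- The ω-limit set of `x` under `f`. -/
def omegaLimitPt (f : ℝ → ℝ) (x : ℝ) : Set ℝ :=
  {y | MapClusterPt y Filter.atTop fun n => f^[n] x}

/-- `f` is asymptotically periodic. -/
def AsympPeriodic (f : ℝ → ℝ) : Prop :=
  {x : ℝ | ∃ p : ℕ, 1 ≤ p ∧ f^[p] x = x}.Finite ∧
  ∀ x : ℝ, ∃ z : ℝ, ∃ p : ℕ, 1 ≤ p ∧ f^[p] z = z ∧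
    omegaLimitPt f x = Set.range fun j : Fin p => f^[(j : ℕ)] z

/-- `f` is asymptotically periodic on the invariant set `s`. -/
def AsympPeriodicOn (f : ℝ → ℝ) (s : Set ℝ) : Prop :=
  {x ∈ s | ∃ p : ℕ, 1 ≤ p ∧ f^[p] x = x}.Finite ∧
  ∀ x ∈ s, ∃ z : ℝ, ∃ p : ℕ, 1 ≤ p ∧ f^[p] z = z ∧
    omegaLimitPt f x = Set.range fun j : Fin p => f^[(j : ℕ)] z

/-!
Lift `f` to the line and code an orbit of `w ↦ F w + δ`, where `F = f ∘ Int.fract`, by the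
translation parts of the branches it follows. Two orbits with the same first `n` letters are
`|lam| ^ n`-close, and they separate only when they straddle a partition point.

If at some time `n` no orbit comes within about `|lam| ^ n` of a partition point, then the first `n`
letters of an itinerary determine it, so there are finitely many itineraries, each of them is
eventually periodic, and `f_δ` is asymptotically periodic. Otherwise, for every `n`, some orbit
comes that close to a partition point; once its first `n` letters and the partition point are fixed,
this confines `δ` to a set of diameter `O(|lam| ^ n)`. It remains to see that there are few words.

Outside countably many parameters no composition of branches maps a partition point to a partition
point. Near such a parameter a long word passes close to the partition at most once in `N`
consecutive steps, so extending it by `N` letters at most doubles the number of words. As `N` is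
arbitrary, words grow subexponentially in number, and the covers by sets of size `|lam| ^ n` give
Hausdorff dimension zero.
-/

open MeasureTheory
open scoped ENNReal Interval

lemma dimH_le_of_frequently_cover {E : Type*} [EMetricSpace E] {s : Set E} {d C : ℝ≥0}
    {ι : ℕ → Type*} [∀ n, Fintype (ι n)] {t : ∀ n, ι n → Set E} {r : ℕ → ℝ≥0}
    (hr : Tendsto r atTop (𝓝 0)) (hdiam : ∀ᶠ n in atTop, ∀ i, Metric.ediam (t n i) ≤ r n)
    (hcover : ∀ᶠ n in atTop, s ⊆ ⋃ i, t n i)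
    (hC : ∃ᶠ n in atTop, Fintype.card (ι n) * r n ^ (d : ℝ) ≤ C) : dimH s ≤ d := by
  borelize E
  have hr' : Tendsto (fun n ↦ (r n : ℝ≥0∞)) atTop (𝓝 0) := ENNReal.tendsto_coe.2 hr
  refine dimH_le_of_hausdorffMeasure_ne_top (ne_top_of_le_ne_top (ENNReal.coe_ne_top (r := C)) ?_)
  refine (Measure.hausdorffMeasure_le_liminf_sum d s _ hr' t hdiam hcover).trans ?_
  refine liminf_le_of_frequently_le' ((hC.and_eventually hdiam).mono fun n hn ↦ ?_)
  calc ∑ i, Metric.ediam (t n i) ^ (d : ℝ)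
      ≤ ∑ _i : ι n, (r n : ℝ≥0∞) ^ (d : ℝ) := by gcongr with i; exact hn.2 i
    _ = ((Fintype.card (ι n) * r n ^ (d : ℝ) : ℝ≥0) : ℝ≥0∞) := by
        simp [ENNReal.coe_rpow_of_nonneg]
    _ ≤ C := by exact_mod_cast hn.1

lemma dimH_le_of_forall_exists_mem_nhdsWithin {E : Type*} [EMetricSpace E]
    [SecondCountableTopology E] {s : Set E} {d : ℝ≥0∞}
    (h : ∀ x ∈ s, ∃ t ∈ 𝓝[s] x, dimH t ≤ d) : dimH s ≤ d := by
  by_contra! hd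
  obtain ⟨x, hx, hlt⟩ := exists_mem_nhdsWithin_lt_dimH_of_lt_dimH hd
  obtain ⟨t, ht, hle⟩ := h x hx
  exact (hlt t ht).not_ge hle

lemma exists_pos_lt_abs_sub {S A : Set ℝ} (hS : S.Finite) (hA : A.Finite) :
    ∃ η > 0, ∀ v ∈ S, ∀ s ∈ A, v ≠ s → η < |v - s| := by
  have hev : ∀ᶠ η in 𝓝[>] (0 : ℝ), ∀ v ∈ S, ∀ s ∈ A, v ≠ s → η < |v - s| := by
    simp only [eventually_all_finite hS, eventually_all_finite hA, eventually_imp_distrib_left]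
    exact fun v _ s _ hvs ↦ nhdsWithin_le_nhds (Iio_mem_nhds (abs_sub_pos.2 hvs))
  exact (eventually_mem_nhdsWithin.and hev).exists

lemma eventually_of_forall_residue {P : ℕ → Prop} {i p : ℕ} (hp : 0 < p)
    (h : ∀ j < p, ∀ᶠ m in atTop, P (i + (m * p + j))) : ∀ᶠ n in atTop, P n := by
  have hall : ∀ᶠ m in atTop, ∀ j ∈ Iio p, P (i + (m * p + j)) :=
    (eventually_all_finite (finite_Iio p)).2 h
  obtain ⟨m₀, hm₀⟩ := eventually_atTop.1 hall
  filter_upwards [eventually_ge_atTop (i + m₀ * p)] with n hn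
  have hquot : m₀ ≤ (n - i) / p := (Nat.le_div_iff_mul_le hp).2 (by lia)
  have hdiv : i + ((n - i) / p * p + (n - i) % p) = n := by
    rw [Nat.div_add_mod' (n - i) p]; lia
  exact hdiv ▸ hm₀ _ hquot _ (Nat.mod_lt _ hp)

lemma tendsto_add_mul_add_atTop {p : ℕ} (hp : 0 < p) (i j : ℕ) :
    Tendsto (fun m ↦ i + (m * p + j)) atTop atTop :=
  tendsto_atTop_mono (fun m ↦ (Nat.le_mul_of_pos_right m hp).trans (by lia)) tendsto_id

lemma setOf_mapClusterPt_eq_range {E : Type*} [TopologicalSpace E] [T2Space E] {y v : ℕ → E}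
    {i p : ℕ} (hp : 0 < p)
    (h : ∀ j, Tendsto (fun m ↦ y (i + (m * p + j))) atTop (𝓝 (v j))) :
    {x | MapClusterPt x atTop y} = range fun j : Fin p ↦ v j := by
  refine Subset.antisymm (fun x hx ↦ ?_) ?_
  · by_contra hne
    have hdisj : ∀ j : Fin p, ∃ U ∈ 𝓝 x, Uᶜ ∈ 𝓝 (v j) := fun j ↦ by
      have := disjoint_nhds_nhds.2 fun hxv : x = v j ↦ hne ⟨j, hxv.symm⟩
      obtain ⟨U, hU, V, hV, hUV⟩ := Filter.disjoint_iff.1 this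
      exact ⟨U, hU, mem_of_superset hV hUV.subset_compl_left⟩
    choose U hU hUv using hdisj
    have hout : ∀ᶠ n in atTop, y n ∉ ⋂ j, U j := eventually_of_forall_residue hp fun j hj ↦
      ((h j).eventually (hUv ⟨j, hj⟩)).mono fun m hm hmem ↦ hm (mem_iInter.1 hmem ⟨j, hj⟩)
    exact (hx.frequently (iInter_mem.2 hU)) hout
  · rintro _ ⟨j, rfl⟩
    exact MapClusterPt.of_comp (tendsto_add_mul_add_atTop hp i j) (h j).mapClusterPt

lemma one_sub_abs_le_two_mul_abs_geom_sum {x : ℝ} (hx : |x| < 1) {n : ℕ} (hn : n ≠ 0) :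
    1 - |x| ≤ 2 * |∑ i ∈ Finset.range n, x ^ i| := by
  have hpow : |x ^ n| ≤ |x| := (abs_pow x n).trans_le (pow_le_of_le_one (abs_nonneg x) hx.le hn)
  calc 1 - |x| ≤ |1 - x ^ n| := by linarith [le_abs_self (x ^ n), le_abs_self (1 - x ^ n)]
    _ = |1 - x| * |∑ i ∈ Finset.range n, x ^ i| := by rw [← mul_neg_geom_sum, abs_mul]
    _ ≤ 2 * |∑ i ∈ Finset.range n, x ^ i| := by
        gcongr
        exact abs_le.2 ⟨by linarith [(abs_lt.1 hx).2], by linarith [(abs_lt.1 hx).1]⟩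

lemma abs_geom_sum_le_inv {x : ℝ} (hx : |x| < 1) (n : ℕ) :
    |∑ i ∈ Finset.range n, x ^ i| ≤ (1 - |x|)⁻¹ :=
  calc |∑ i ∈ Finset.range n, x ^ i| ≤ ∑ i ∈ Finset.range n, |x| ^ i := by
        simpa only [abs_pow] using Finset.abs_sum_le_sum_abs (fun i ↦ x ^ i) (Finset.range n)
    _ ≤ ∑' i : ℕ, |x| ^ i :=
        (summable_geometric_of_lt_one (abs_nonneg x) hx).sum_le_tsum _ fun _ _ ↦ by positivity
    _ = (1 - |x|)⁻¹ := tsum_geometric_of_lt_one (abs_nonneg x) hx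

/-- The translation part of `F` at `w`, for a map `F` with slope `lam`. -/
def digit (lam : ℝ) (F : ℝ → ℝ) (w : ℝ) : ℝ := F w - lam * w

/-- The lift to `ℝ` of the perturbed map `f_δ`: the translation by `δ` after `F`. -/
def perturb (F : ℝ → ℝ) (δ w : ℝ) : ℝ := F w + δ

/-- The `n`-th point of the perturbed orbit coded by a pair `p = (δ, w)` of a parameter and a
starting point. -/
def orbitAt (F : ℝ → ℝ) (p : ℝ × ℝ) (n : ℕ) : ℝ := (perturb F p.1)^[n] p.2

/-- The itinerary of `p = (δ, w)`, recorded by the digits met along its orbit. -/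
def itinerary (lam : ℝ) (F : ℝ → ℝ) (p : ℝ × ℝ) (n : ℕ) : ℝ := digit lam F (orbitAt F p n)

/-- The composition `φ_ω` of the branches `x ↦ lam * x + τ i + δ` with `i < n`, at `x`. -/
def branchIter (lam δ : ℝ) (τ : ℕ → ℝ) (x : ℝ) : ℕ → ℝ
  | 0 => x
  | n + 1 => lam * branchIter lam δ τ x n + τ n + δ

section Orbits

variable {lam : ℝ} {F : ℝ → ℝ} {p q : ℝ × ℝ}

lemma orbitAt_iterate (F : ℝ → ℝ) (δ w : ℝ) (i n : ℕ) :
    orbitAt F (δ, (perturb F δ)^[i] w) n = orbitAt F (δ, w) (i + n) := by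
  simp only [orbitAt, ← Function.iterate_add_apply, Nat.add_comm]

lemma orbitAt_succ (F : ℝ → ℝ) (p : ℝ × ℝ) (n : ℕ) :
    orbitAt F p (n + 1) = perturb F p.1 (orbitAt F p n) :=
  Function.iterate_succ_apply' ..

lemma orbitAt_mem {X : Set ℝ} (h : MapsTo (perturb F p.1) X X) (hp : p.2 ∈ X) (n : ℕ) :
    orbitAt F p n ∈ X :=
  h.iterate n hp

lemma branchIter_itinerary (lam : ℝ) (F : ℝ → ℝ) (p : ℝ × ℝ) (i n : ℕ) :
    branchIter lam p.1 (fun m ↦ itinerary lam F p (i + m)) (orbitAt F p i) n =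
      orbitAt F p (i + n) := by
  induction n with
  | zero => rfl
  | succ n ih =>
    rw [branchIter, ih, ← add_assoc, orbitAt_succ, perturb, itinerary, digit]
    ring

lemma branchIter_congr {δ x : ℝ} {τ τ' : ℕ → ℝ} {n : ℕ} (h : EqOn τ τ' (Iio n)) :
    branchIter lam δ τ x n = branchIter lam δ τ' x n := by
  induction n with
  | zero => rfl
  | succ n ih =>
    rw [branchIter, branchIter, ih (h.mono (Iio_subset_Iio n.le_succ)),
      h (mem_Iio.2 n.lt_succ_self)]

lemma branchIter_sub_branchIter (lam δ δ' : ℝ) (τ : ℕ → ℝ) (x x' : ℝ) (n : ℕ) :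
    branchIter lam δ τ x n - branchIter lam δ' τ x' n =
      lam ^ n * (x - x') + (∑ i ∈ Finset.range n, lam ^ i) * (δ - δ') := by
  induction n with
  | zero => simp [branchIter]
  | succ n ih =>
    rw [branchIter, branchIter, geom_sum_succ]
    linear_combination lam * ih

lemma abs_branchIter_sub_le (hlam : |lam| < 1) (δ δ' : ℝ) (τ : ℕ → ℝ) (x x' : ℝ) (n : ℕ) :
    |branchIter lam δ τ x n - branchIter lam δ' τ x' n| ≤
      |lam| ^ n * |x - x'| + |δ - δ'| / (1 - |lam|) := by
  rw [branchIter_sub_branchIter, ← abs_pow, ← abs_mul, div_eq_inv_mul]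
  refine (abs_add_le _ _).trans ?_
  rw [abs_mul (∑ i ∈ Finset.range n, lam ^ i)]
  gcongr
  exact abs_geom_sum_le_inv hlam n

lemma exists_branchIter_eq_orbitAt {n : ℕ}
    (h : EqOn (itinerary lam F p) (itinerary lam F q) (Iio n)) :
    ∃ τ, orbitAt F p n = branchIter lam p.1 τ p.2 n ∧
      orbitAt F q n = branchIter lam q.1 τ q.2 n := by
  have horbit (p : ℝ × ℝ) : orbitAt F p n = branchIter lam p.1 (itinerary lam F p) p.2 n := by
    simpa only [zero_add] using! (branchIter_itinerary lam F p 0 n).symm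
  exact ⟨_, horbit p, (horbit q).trans (branchIter_congr h.symm)⟩

lemma orbitAt_sub_orbitAt {n : ℕ} (h : EqOn (itinerary lam F p) (itinerary lam F q) (Iio n)) :
    orbitAt F p n - orbitAt F q n =
      lam ^ n * (p.2 - q.2) + (∑ i ∈ Finset.range n, lam ^ i) * (p.1 - q.1) := by
  obtain ⟨τ, hp, hq⟩ := exists_branchIter_eq_orbitAt h
  rw [hp, hq, branchIter_sub_branchIter]

lemma abs_orbitAt_sub_le (hlam : |lam| < 1) {n : ℕ}
    (h : EqOn (itinerary lam F p) (itinerary lam F q) (Iio n)) :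
    |orbitAt F p n - orbitAt F q n| ≤ |lam| ^ n * |p.2 - q.2| + |p.1 - q.1| / (1 - |lam|) := by
  obtain ⟨τ, hp, hq⟩ := exists_branchIter_eq_orbitAt h
  exact hp ▸ hq ▸ abs_branchIter_sub_le hlam ..

lemma abs_orbitAt_sub_orbitAt {δ w w' : ℝ} {n : ℕ}
    (h : EqOn (itinerary lam F (δ, w)) (itinerary lam F (δ, w')) (Iio n)) :
    |orbitAt F (δ, w) n - orbitAt F (δ, w') n| = |lam| ^ n * |w - w'| := by
  rw [orbitAt_sub_orbitAt h, sub_self, mul_zero, add_zero, abs_mul, abs_pow]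

lemma exists_tendsto_orbitAt_mul (hlam : |lam| < 1) {δ w : ℝ} {p : ℕ} (hp : 0 < p)
    (h : itinerary lam F (δ, w) = itinerary lam F (δ, orbitAt F (δ, w) p)) :
    ∃ z, Tendsto (fun m ↦ orbitAt F (δ, w) (m * p)) atTop (𝓝 z) := by
  refine cauchySeq_tendsto_of_complete (cauchySeq_of_le_geometric (|lam| ^ p)
    |w - orbitAt F (δ, w) p| (pow_lt_one₀ (abs_nonneg lam) hlam hp.ne') fun m ↦ ?_)
  rw [Nat.succ_mul, Nat.add_comm (m * p) p, ← orbitAt_iterate, Real.dist_eq,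
    ← pow_mul', mul_comm |w - _|]
  exact (abs_orbitAt_sub_orbitAt fun i _ ↦ congrFun h i).le

lemma abs_param_sub_le (hlam : |lam| < 1) {n : ℕ} (hn : n ≠ 0) {r s : ℝ}
    (h : EqOn (itinerary lam F p) (itinerary lam F q) (Iio n))
    (hp : |orbitAt F p n - s| ≤ r) (hq : |orbitAt F q n - s| ≤ r)
    (hpq : |lam| ^ n * |p.2 - q.2| ≤ r) : |p.1 - q.1| ≤ 6 * r / (1 - |lam|) := by
  have hsum : |∑ i ∈ Finset.range n, lam ^ i| * |p.1 - q.1| ≤ 3 * r := by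
    rw [← abs_pow, ← abs_mul] at hpq
    rw [← abs_mul, show (∑ i ∈ Finset.range n, lam ^ i) * (p.1 - q.1) =
      orbitAt F p n - s - (orbitAt F q n - s) - lam ^ n * (p.2 - q.2) by
        linear_combination -orbitAt_sub_orbitAt h]
    linarith [abs_sub (orbitAt F p n - s - (orbitAt F q n - s)) (lam ^ n * (p.2 - q.2)),
      abs_sub (orbitAt F p n - s) (orbitAt F q n - s)]
  rw [le_div_iff₀ (by linarith)]
  nlinarith [mul_le_mul_of_nonneg_right (one_sub_abs_le_two_mul_abs_geom_sum hlam hn)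
    (abs_nonneg (p.1 - q.1))]

end Orbits

/-- The map `F` is affine of slope `lam` on the pieces into which the finite set `A` cuts `X`:
its digit changes only across points of `A`, each of which belongs to the piece on its right. -/
structure IsPiecewiseAffineOn (lam : ℝ) (F : ℝ → ℝ) (A X : Set ℝ) : Prop where
  finite : A.Finite
  exists_mem_uIoc : ∀ u ∈ X, ∀ v ∈ X, digit lam F u ≠ digit lam F v → ∃ s ∈ A, s ∈ Ι u v

/-- The word formed by the first `n` digits of the itinerary of `p`. -/
def word (lam : ℝ) (F : ℝ → ℝ) (n : ℕ) (p : ℝ × ℝ) : Fin n → ℝ := fun i ↦ itinerary lam F p i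

/-- The words of length `n` realised by the points of `X` and the parameters in `Δ`. -/
def words (lam : ℝ) (F : ℝ → ℝ) (Δ X : Set ℝ) (n : ℕ) : Set (Fin n → ℝ) :=
  word lam F n '' (Δ ×ˢ X)

lemma word_eq_word_iff {lam : ℝ} {F : ℝ → ℝ} {n : ℕ} {p q : ℝ × ℝ} :
    word lam F n p = word lam F n q ↔ EqOn (itinerary lam F p) (itinerary lam F q) (Iio n) := by
  simp only [funext_iff, Fin.forall_iff, word, EqOn, mem_Iio]

lemma abs_sub_le_of_mem_uIoc {s u v : ℝ} (h : s ∈ Ι u v) : |u - s| ≤ |u - v| := by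
  simpa only [abs_sub_comm] using abs_sub_left_of_mem_uIcc (uIoc_subset_uIcc h)

namespace IsPiecewiseAffineOn

variable {lam : ℝ} {F : ℝ → ℝ} {A X Δ : Set ℝ}

lemma finite_digits (hF : IsPiecewiseAffineOn lam F A X) : (digit lam F '' X).Finite := by
  set Q : ℝ → Set ℝ := fun w ↦ A ∩ Iic w with hQ
  have hfactor : ∀ u ∈ X, ∀ v ∈ X, Q u = Q v → digit lam F u = digit lam F v := by
    intro u hu v hv hQuv
    by_contra hne
    obtain ⟨s, hsA, hs⟩ := hF.exists_mem_uIoc u hu v hv hne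
    have : s ≤ u ↔ s ≤ v := by simpa [hQ, hsA] using Set.ext_iff.1 hQuv s
    grind [mem_uIoc]
  have hfin : (Q '' X).Finite :=
    hF.finite.finite_subsets.subset (image_subset_iff.2 fun _ _ ↦ inter_subset_left)
  refine (hfin.image (digit lam F ∘ Function.invFunOn Q X)).subset ?_
  rintro _ ⟨w, hw, rfl⟩
  exact ⟨Q w, mem_image_of_mem Q hw, hfactor _ (Function.invFunOn_apply_mem hw) w hw
    (Function.invFunOn_apply_eq hw)⟩

lemma finite_words (hF : IsPiecewiseAffineOn lam F A X)
    (hΔ : ∀ δ ∈ Δ, MapsTo (perturb F δ) X X) (n : ℕ) : (words lam F Δ X n).Finite := by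
  refine (Set.Finite.pi' fun _ : Fin n ↦ hF.finite_digits).subset ?_
  rintro _ ⟨p, hp, rfl⟩ i
  exact mem_image_of_mem _ (orbitAt_mem (hΔ _ hp.1) hp.2 i)

lemma continuousWithinAt (hF : IsPiecewiseAffineOn lam F A X) {y : ℝ} (hyX : y ∈ X) (hyA : y ∉ A) :
    ContinuousWithinAt F X y := by
  have hseg : ∀ᶠ u in 𝓝 y, uIcc u y ⊆ Aᶜ :=
    (tendsto_id.uIcc tendsto_const_nhds).eventually
      (eventually_smallSets_subset.2 (hF.finite.isClosed.compl_mem_nhds hyA))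
  have hdigit : ∀ᶠ u in 𝓝[X] y, digit lam F u = digit lam F y := by
    filter_upwards [nhdsWithin_le_nhds hseg, self_mem_nhdsWithin] with u hu huX
    by_contra hne
    obtain ⟨s, hsA, hs⟩ := hF.exists_mem_uIoc u huX y hyX hne
    exact hu (uIoc_subset_uIcc hs) hsA
  have haffine : ContinuousWithinAt (fun u ↦ lam * u + digit lam F y) X y := by fun_prop
  refine haffine.congr_of_eventuallyEq (hdigit.mono fun u hu ↦ ?_) (add_sub_cancel ..).symm
  rw [← hu]
  exact (add_sub_cancel ..).symm

end IsPiecewiseAffineOn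

/-- The images of points of `A` under compositions of `m` branches `x ↦ lam * x + t + δ`
with `t ∈ T`. -/
def singularImages (lam δ : ℝ) (T A : Set ℝ) (m : ℕ) : Set ℝ :=
  image2 (fun τ s ↦ branchIter lam δ τ s m) {τ | ∀ i, τ i ∈ T} A

/-- The perturbation by `δ` has a singular connection: some nonempty composition of branches maps
a point of `A` to a point of `A`. -/
def HasSingularConnection (lam : ℝ) (T A : Set ℝ) (δ : ℝ) : Prop :=
  ∃ m ≠ 0, ∃ s ∈ A, s ∈ singularImages lam δ T A m

lemma finite_singularImages {T A : Set ℝ} (hT : T.Finite) (hA : A.Finite) (lam δ : ℝ) (m : ℕ) :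
    (singularImages lam δ T A m).Finite := by
  induction m with
  | zero => exact hA.subset (image2_subset_iff.2 fun _ _ _ hs ↦ hs)
  | succ m ih =>
    refine (ih.image2 (fun x t ↦ lam * x + t + δ) hT).subset (image2_subset_iff.2 ?_)
    exact fun τ hτ s hs ↦ mem_image2_of_mem (mem_image2_of_mem hτ hs) (hτ m)

lemma countable_setOf_hasSingularConnection {lam : ℝ} (hlam : |lam| < 1) {T A : Set ℝ}
    (hT : T.Finite) (hA : A.Finite) : {δ | HasSingularConnection lam T A δ}.Countable := by
  let connecting (m : ℕ) : Set ℝ := image2 (fun s v ↦ (s - v) / ∑ i ∈ Finset.range m, lam ^ i) A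
    (singularImages lam 0 T A m)
  refine (countable_iUnion fun m ↦ (hA.image2 _ (finite_singularImages hT hA lam 0 m)).countable :
    (⋃ m, connecting m).Countable).mono ?_
  rintro δ ⟨m, hm, _, hs, τ, hτ, s, hsA, rfl⟩
  refine mem_iUnion.2 ⟨m, mem_image2.2 ⟨_, hs, _, mem_image2_of_mem hτ hsA, ?_⟩⟩
  have hsum : ∑ i ∈ Finset.range m, lam ^ i ≠ 0 := fun h ↦ by
    have := one_sub_abs_le_two_mul_abs_geom_sum hlam hm
    rw [h, abs_zero] at this
    linarith
  rw [div_eq_iff hsum, branchIter_sub_branchIter]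
  ring

/-- A set `Δ` of parameters near `δ₀` for which, up to errors of size `η`, fewer than `N` branches
starting at a point of `A` never lead back to `A`. Words of length at least `n₀` then at most
double in number when they are extended by `N` letters. -/
structure IsSlowWindow (lam : ℝ) (F : ℝ → ℝ) (A X Δ : Set ℝ) (δ₀ η : ℝ) (n₀ N : ℕ) : Prop where
  mapsTo : ∀ δ ∈ Δ, MapsTo (perturb F δ) X X
  abs_param_sub_le : ∀ δ ∈ Δ, |δ - δ₀| / (1 - |lam|) ≤ η / 4
  pow_mul_diam_le : |lam| ^ n₀ * Metric.diam X ≤ η / 2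
  separated : ∀ m < N, ∀ v ∈ singularImages lam δ₀ (digit lam F '' X) A m, ∀ s ∈ A,
    |v - s| ≤ 3 * η → m = 0 ∧ v = s

namespace IsSlowWindow

variable {lam : ℝ} {F : ℝ → ℝ} {A X Δ : Set ℝ} {δ₀ η : ℝ} {n₀ N : ℕ} {p q r : ℝ × ℝ}

lemma abs_orbitAt_sub_le (hW : IsSlowWindow lam F A X Δ δ₀ η n₀ N) (hlam : |lam| < 1)
    (hX : Bornology.IsBounded X) (hp : p ∈ Δ ×ˢ X) (hq : q ∈ Δ ×ˢ X) {i : ℕ} (hi : n₀ ≤ i)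
    (hpq : EqOn (itinerary lam F p) (itinerary lam F q) (Iio i)) :
    |orbitAt F p i - orbitAt F q i| ≤ η := by
  have hstart : |lam| ^ i * |p.2 - q.2| ≤ η / 2 := by
    refine le_trans ?_ hW.pow_mul_diam_le
    gcongr ?_ * ?_
    · exact pow_le_pow_of_le_one (abs_nonneg lam) hlam.le hi
    · exact Metric.dist_le_diam_of_mem hX hp.2 hq.2
  have hparam : |p.1 - q.1| / (1 - |lam|) ≤ η / 2 :=
    calc |p.1 - q.1| / (1 - |lam|) ≤ (|p.1 - δ₀| + |q.1 - δ₀|) / (1 - |lam|) := by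
          have := sub_pos.2 hlam
          gcongr
          simpa only [abs_sub_comm q.1] using abs_sub_le p.1 δ₀ q.1
      _ ≤ η / 2 := by
          rw [add_div]
          linarith [hW.abs_param_sub_le p.1 hp.1, hW.abs_param_sub_le q.1 hq.1]
  linarith [_root_.abs_orbitAt_sub_le hlam hpq]

lemma eq_of_mem_near_orbitAt (hW : IsSlowWindow lam F A X Δ δ₀ η n₀ N) (hlam : |lam| < 1)
    (hp : p ∈ Δ ×ˢ X) {j m : ℕ} (hm : m < N) {s s' : ℝ} (hs : s ∈ A)
    (hps : |orbitAt F p j - s| ≤ η) (hs' : s' ∈ A) (hps' : |orbitAt F p (j + m) - s'| ≤ η) :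
    m = 0 ∧ s = s' := by
  set τ : ℕ → ℝ := fun i ↦ itinerary lam F p (j + i)
  have hτ : ∀ i, τ i ∈ digit lam F '' X := fun i ↦
    mem_image_of_mem _ (orbitAt_mem (hW.mapsTo _ hp.1) hp.2 _)
  have hshadow : |orbitAt F p (j + m) - branchIter lam δ₀ τ s m| ≤ η + η / 4 := by
    rw [← branchIter_itinerary]
    refine (abs_branchIter_sub_le hlam ..).trans (add_le_add ?_ (hW.abs_param_sub_le _ hp.1))
    exact (mul_le_of_le_one_left (abs_nonneg _) (pow_le_one₀ (abs_nonneg lam) hlam.le)).trans hps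
  have hclose : |branchIter lam δ₀ τ s m - s'| ≤ 3 * η := by
    rw [abs_sub_comm] at hshadow
    linarith [abs_sub_le (branchIter lam δ₀ τ s m) (orbitAt F p (j + m)) s',
      (abs_nonneg _).trans hps]
  obtain ⟨rfl, hv⟩ := hW.separated m hm _ (mem_image2_of_mem hτ hs) s' hs' hclose
  exact ⟨rfl, hv⟩

-- Having passed `s` at time `j`, the orbits stay away from `A` until time `j + N`, so they can only
-- be separated by falling on different sides of `s`.
lemma eqOn_of_same_side (hW : IsSlowWindow lam F A X Δ δ₀ η n₀ N) (hlam : |lam| < 1)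
    (hF : IsPiecewiseAffineOn lam F A X) (hX : Bornology.IsBounded X)
    (hp : p ∈ Δ ×ˢ X) (hq : q ∈ Δ ×ˢ X) {j : ℕ} (hj : n₀ ≤ j)
    (hpq : EqOn (itinerary lam F p) (itinerary lam F q) (Iio j)) {s : ℝ} (hs : s ∈ A)
    (hps : |orbitAt F p j - s| ≤ η) (hside : orbitAt F p j < s ↔ orbitAt F q j < s) :
    EqOn (itinerary lam F p) (itinerary lam F q) (Iio (j + N)) := by
  intro i hi
  induction i using Nat.strong_induction_on with
  | _ i ih =>
    rcases lt_or_ge i j with hij | hij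
    · exact hpq hij
    obtain ⟨m, rfl⟩ := Nat.exists_eq_add_of_le hij
    by_contra hne
    obtain ⟨s', hs', hmem⟩ := hF.exists_mem_uIoc _ (orbitAt_mem (hW.mapsTo _ hp.1) hp.2 _) _
      (orbitAt_mem (hW.mapsTo _ hq.1) hq.2 _) hne
    have hps' : |orbitAt F p (j + m) - s'| ≤ η := (abs_sub_le_of_mem_uIoc hmem).trans
      (hW.abs_orbitAt_sub_le hlam hX hp hq (hj.trans hij) fun k hk ↦
        ih k hk (hk.trans (mem_Iio.1 hi)))
    obtain ⟨rfl, rfl⟩ := hW.eq_of_mem_near_orbitAt hlam hp (Nat.add_lt_add_iff_left.1 hi) hs hps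
      hs' hps'
    rcases mem_uIoc.1 hmem with ⟨hlt, hle⟩ | ⟨hlt, hle⟩
    · exact hle.not_gt (hside.1 hlt)
    · exact hle.not_gt (hside.2 hlt)

lemma eqOn_or_eqOn_of_split (hW : IsSlowWindow lam F A X Δ δ₀ η n₀ N) (hlam : |lam| < 1)
    (hF : IsPiecewiseAffineOn lam F A X) (hX : Bornology.IsBounded X) (hp : p ∈ Δ ×ˢ X)
    (hq : q ∈ Δ ×ˢ X) (hr : r ∈ Δ ×ˢ X) {j : ℕ} (hj : n₀ ≤ j)
    (hpr : EqOn (itinerary lam F p) (itinerary lam F r) (Iio j))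
    (hqr : EqOn (itinerary lam F q) (itinerary lam F r) (Iio j))
    (hne : itinerary lam F p j ≠ itinerary lam F q j) :
    EqOn (itinerary lam F p) (itinerary lam F r) (Iio (j + N)) ∨
      EqOn (itinerary lam F q) (itinerary lam F r) (Iio (j + N)) := by
  obtain ⟨s, hs, hmem⟩ := hF.exists_mem_uIoc _ (orbitAt_mem (hW.mapsTo _ hp.1) hp.2 _) _
    (orbitAt_mem (hW.mapsTo _ hq.1) hq.2 _) hne
  have hclose := hW.abs_orbitAt_sub_le hlam hX hp hq hj (hpr.trans hqr.symm)
  have hps : |orbitAt F p j - s| ≤ η := (abs_sub_le_of_mem_uIoc hmem).trans hclose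
  have hqs : |orbitAt F q j - s| ≤ η :=
    (abs_sub_le_of_mem_uIoc (by rwa [uIoc_comm])).trans (by rwa [abs_sub_comm])
  have hside :
      (orbitAt F p j < s ↔ orbitAt F r j < s) ∨ (orbitAt F q j < s ↔ orbitAt F r j < s) := by
    grind [mem_uIoc]
  exact hside.imp (hW.eqOn_of_same_side hlam hF hX hp hr hj hpr hs hps)
    (hW.eqOn_of_same_side hlam hF hX hq hr hj hqr hs hqs)

lemma exists_eqOn_of_three (hW : IsSlowWindow lam F A X Δ δ₀ η n₀ N) (hlam : |lam| < 1)
    (hF : IsPiecewiseAffineOn lam F A X) (hX : Bornology.IsBounded X) (hp : p ∈ Δ ×ˢ X)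
    (hq : q ∈ Δ ×ˢ X) (hr : r ∈ Δ ×ˢ X) {n : ℕ} (hn : n₀ ≤ n)
    (hpr : EqOn (itinerary lam F p) (itinerary lam F r) (Iio n))
    (hqr : EqOn (itinerary lam F q) (itinerary lam F r) (Iio n)) :
    EqOn (itinerary lam F p) (itinerary lam F q) (Iio (n + N)) ∨
      EqOn (itinerary lam F p) (itinerary lam F r) (Iio (n + N)) ∨
      EqOn (itinerary lam F q) (itinerary lam F r) (Iio (n + N)) := by
  by_cases hpq : ∃ j, itinerary lam F p j ≠ itinerary lam F r j ∨
    itinerary lam F q j ≠ itinerary lam F r j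
  swap
  · push Not at hpq
    exact Or.inr (Or.inl fun j _ ↦ (hpq j).1)
  classical
  obtain ⟨j, hj, hmin⟩ := Nat.findX hpq
  push Not at hmin
  have hnj : n ≤ j := by
    by_contra! hlt
    exact hj.elim (fun h ↦ h (hpr hlt)) (fun h ↦ h (hqr hlt))
  have hpr' : EqOn (itinerary lam F p) (itinerary lam F r) (Iio j) := fun i hi ↦ (hmin i hi).1
  have hqr' : EqOn (itinerary lam F q) (itinerary lam F r) (Iio j) := fun i hi ↦ (hmin i hi).2
  have hmono : Iio (n + N) ⊆ Iio (j + N) := Iio_subset_Iio (Nat.add_le_add_right hnj N)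
  rcases hj with hne | hne
  · rcases hW.eqOn_or_eqOn_of_split hlam hF hX hp hr hq (hn.trans hnj) (hpr'.trans hqr'.symm)
      hqr'.symm hne with h | h
    · exact Or.inl (h.mono hmono)
    · exact Or.inr (Or.inr (h.symm.mono hmono))
  · rcases hW.eqOn_or_eqOn_of_split hlam hF hX hq hr hp (hn.trans hnj) (hqr'.trans hpr'.symm)
      hpr'.symm hne with h | h
    · exact Or.inl (h.symm.mono hmono)
    · exact Or.inr (Or.inl (h.symm.mono hmono))

lemma ncard_words_add_le (hW : IsSlowWindow lam F A X Δ δ₀ η n₀ N) (hlam : |lam| < 1)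
    (hF : IsPiecewiseAffineOn lam F A X) (hX : Bornology.IsBounded X) {n : ℕ} (hn : n₀ ≤ n) :
    (words lam F Δ X (n + N)).ncard ≤ 2 * (words lam F Δ X n).ncard := by
  classical
  rw [ncard_eq_toFinset_card _ (hF.finite_words hW.mapsTo _),
    ncard_eq_toFinset_card _ (hF.finite_words hW.mapsTo _)]
  refine Finset.card_le_mul_card_image_of_maps_to (f := fun ω ↦ ω ∘ Fin.castAdd N) ?_ 2 ?_
  · simp only [Finite.mem_toFinset]
    rintro _ ⟨p, hp, rfl⟩
    exact ⟨p, hp, rfl⟩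
  intro ω _
  by_contra! hcard
  obtain ⟨_, hp, _, hq, _, hr, hpq, hpr, hqr⟩ := Finset.two_lt_card.1 hcard
  simp only [Finset.mem_filter, Finite.mem_toFinset] at hp hq hr
  obtain ⟨⟨p, hpmem, rfl⟩, hpω⟩ := hp
  obtain ⟨⟨q, hqmem, rfl⟩, hqω⟩ := hq
  obtain ⟨⟨r, hrmem, rfl⟩, hrω⟩ := hr
  rw [Ne, word_eq_word_iff] at hpq hpr hqr
  have hprefix : ∀ {u : ℝ × ℝ}, word lam F (n + N) u ∘ Fin.castAdd N = ω →
      EqOn (itinerary lam F u) (itinerary lam F r) (Iio n) := fun hu ↦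
    word_eq_word_iff.1 (hu.trans hrω.symm)
  exact (hW.exists_eqOn_of_three hlam hF hX hpmem hqmem hrmem hn (hprefix hpω) (hprefix hqω)).elim
    hpq (Or.elim · hpr hqr)

lemma ncard_words_add_mul_le (hW : IsSlowWindow lam F A X Δ δ₀ η n₀ N) (hlam : |lam| < 1)
    (hF : IsPiecewiseAffineOn lam F A X) (hX : Bornology.IsBounded X) (q : ℕ) :
    (words lam F Δ X (n₀ + q * N)).ncard ≤ 2 ^ q * (words lam F Δ X n₀).ncard := by
  induction q with
  | zero => rw [Nat.zero_mul, add_zero, pow_zero, one_mul]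
  | succ q ih =>
    rw [Nat.succ_mul, ← add_assoc, pow_succ', mul_assoc]
    exact (hW.ncard_words_add_le hlam hF hX (Nat.le_add_right ..)).trans (by gcongr)

end IsSlowWindow

/-- The parameter `δ` is resonant if at every time some perturbed orbit comes within the contracted
size of `X` of a point of `A`, so that no fixed number of letters is guaranteed to determine the
itineraries. -/
def IsResonant (lam : ℝ) (F : ℝ → ℝ) (A X : Set ℝ) (δ : ℝ) : Prop :=
  ∀ n, ∃ w ∈ X, ∃ s ∈ A, |orbitAt F (δ, w) n - s| ≤ |lam| ^ n * Metric.diam X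

section Dimension

variable {lam : ℝ} {F : ℝ → ℝ} {A X Δ : Set ℝ}

lemma ediam_setOf_near_le (hlam : |lam| < 1) (hX : Bornology.IsBounded X) {n : ℕ} (hn : n ≠ 0)
    (ω : Fin n → ℝ) (s : ℝ) :
    Metric.ediam {δ | ∃ w ∈ X, word lam F n (δ, w) = ω ∧
      |orbitAt F (δ, w) n - s| ≤ |lam| ^ n * Metric.diam X} ≤
      ENNReal.ofReal (‖lam‖ ^ n * (6 * Metric.diam X / (1 - ‖lam‖))) := by
  refine Metric.ediam_le ?_
  rintro δ ⟨w, hw, hω, hs⟩ δ' ⟨w', hw', hω', hs'⟩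
  have hparam := abs_param_sub_le hlam hn (word_eq_word_iff.1 (hω.trans hω'.symm)) hs hs'
    (mul_le_mul_of_nonneg_left (Metric.dist_le_diam_of_mem hX hw hw') (by positivity))
  rw [edist_dist, Real.dist_eq]
  exact ENNReal.ofReal_le_ofReal (hparam.trans_eq (by simp only [Real.norm_eq_abs]; ring))

lemma dimH_setOf_isResonant_le_of_frequently (hlam : |lam| < 1)
    (hF : IsPiecewiseAffineOn lam F A X) (hX : Bornology.IsBounded X)
    (hΔ : ∀ δ ∈ Δ, MapsTo (perturb F δ) X X) {d C : ℝ≥0}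
    (hC : ∃ᶠ n in atTop, (words lam F Δ X n).ncard * (‖lam‖₊ ^ (d : ℝ)) ^ n ≤ C) :
    dimH {δ ∈ Δ | IsResonant lam F A X δ} ≤ d := by
  have := hF.finite.fintype
  have (n : ℕ) := (hF.finite_words hΔ n).fintype
  let K : ℝ≥0 := Real.toNNReal (6 * Metric.diam X / (1 - ‖lam‖))
  let t (n : ℕ) (i : words lam F Δ X n × A) : Set ℝ :=
    {δ | ∃ w ∈ X, word lam F n (δ, w) = i.1 ∧
      |orbitAt F (δ, w) n - i.2| ≤ |lam| ^ n * Metric.diam X}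
  have hr : Tendsto (fun n ↦ ‖lam‖₊ ^ n * K) atTop (𝓝 0) := by
    simpa only [zero_mul] using
      (tendsto_pow_atTop_nhds_zero_of_lt_one (r := ‖lam‖₊) zero_le hlam).mul_const K
  refine dimH_le_of_frequently_cover (C := C * (A.ncard * K ^ (d : ℝ))) (t := t) hr ?_ ?_ ?_
  · filter_upwards [eventually_ne_atTop 0] with n hn i
    refine (ediam_setOf_near_le hlam hX hn i.1 i.2).trans_eq (ENNReal.coe_inj.2 ?_)
    rw [Real.toNNReal_mul (by positivity), Real.toNNReal_pow (norm_nonneg _), norm_toNNReal]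
  · filter_upwards with n
    rintro δ ⟨hδ, hres⟩
    obtain ⟨w, hw, s, hs, hnear⟩ := hres n
    exact mem_iUnion.2 ⟨(⟨_, mem_image_of_mem _ (mk_mem_prod hδ hw)⟩, ⟨s, hs⟩), w, hw, rfl, hnear⟩
  · refine hC.mono fun n hn ↦ ?_
    calc (Fintype.card (words lam F Δ X n × A) : ℝ≥0) * (‖lam‖₊ ^ n * K) ^ (d : ℝ)
        = (words lam F Δ X n).ncard * (‖lam‖₊ ^ (d : ℝ)) ^ n * (A.ncard * K ^ (d : ℝ)) := by
          rw [Fintype.card_prod, Nat.cast_mul, NNReal.mul_rpow, ← NNReal.rpow_natCast_mul,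
            ← NNReal.rpow_mul_natCast, mul_comm (n : ℝ), ← Nat.card_eq_fintype_card,
            ← Nat.card_eq_fintype_card, Nat.card_coe_set_eq, Nat.card_coe_set_eq]
          ring
      _ ≤ C * (A.ncard * K ^ (d : ℝ)) := by gcongr

lemma IsSlowWindow.dimH_setOf_isResonant_le {δ₀ η : ℝ} {n₀ N : ℕ}
    (hW : IsSlowWindow lam F A X Δ δ₀ η n₀ N) (hlam : |lam| < 1)
    (hF : IsPiecewiseAffineOn lam F A X) (hX : Bornology.IsBounded X) {d : ℝ≥0} (hN : N ≠ 0)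
    (hd : 2 * (‖lam‖₊ ^ (d : ℝ)) ^ N ≤ 1) : dimH {δ ∈ Δ | IsResonant lam F A X δ} ≤ d := by
  set c : ℝ≥0 := ‖lam‖₊ ^ (d : ℝ)
  have hc : c ≤ 1 := NNReal.rpow_le_one hlam.le d.2
  have htimes : Tendsto (fun q ↦ n₀ + q * N) atTop atTop := by
    simpa only [add_zero] using tendsto_add_mul_add_atTop (Nat.pos_of_ne_zero hN) n₀ 0
  refine dimH_setOf_isResonant_le_of_frequently hlam hF hX hW.mapsTo
    (C := (words lam F Δ X n₀).ncard) (htimes.frequently (Frequently.of_forall fun q ↦ ?_))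
  calc ((words lam F Δ X (n₀ + q * N)).ncard : ℝ≥0) * c ^ (n₀ + q * N)
      ≤ (2 ^ q * (words lam F Δ X n₀).ncard) * c ^ (q * N) := by
        refine mul_le_mul' ?_ (pow_le_pow_of_le_one zero_le hc (Nat.le_add_left ..))
        exact_mod_cast hW.ncard_words_add_mul_le hlam hF hX q
    _ = (words lam F Δ X n₀).ncard * (2 * c ^ N) ^ q := by rw [mul_pow, ← pow_mul']; ring
    _ ≤ (words lam F Δ X n₀).ncard := mul_le_of_le_one_right zero_le (pow_le_one₀ zero_le hd)

lemma exists_isSlowWindow (hlam : |lam| < 1) (hF : IsPiecewiseAffineOn lam F A X) {δ₀ : ℝ}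
    (hΔ : ∀ δ ∈ Δ, MapsTo (perturb F δ) X X)
    (hδ₀ : ¬ HasSingularConnection lam (digit lam F '' X) A δ₀) (N : ℕ) :
    ∃ ε > 0, ∃ η n₀, IsSlowWindow lam F A X (Δ ∩ Metric.ball δ₀ ε) δ₀ η n₀ N := by
  have hfin : (⋃ m ∈ Iio N, singularImages lam δ₀ (digit lam F '' X) A m).Finite :=
    (finite_Iio N).biUnion fun m _ ↦ finite_singularImages hF.finite_digits hF.finite lam δ₀ m
  obtain ⟨η, hη, hsep⟩ := exists_pos_lt_abs_sub hfin hF.finite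
  have h1 : 0 < 1 - |lam| := sub_pos.2 hlam
  have hdiam : Tendsto (fun n ↦ |lam| ^ n * Metric.diam X) atTop (𝓝 0) := by
    simpa only [zero_mul] using
      (tendsto_pow_atTop_nhds_zero_of_lt_one (abs_nonneg lam) hlam).mul_const (Metric.diam X)
  obtain ⟨n₀, hn₀⟩ := (hdiam.eventually_le_const (show 0 < η / 3 / 2 by positivity)).exists
  refine ⟨η / 3 / 4 * (1 - |lam|), by positivity, η / 3, n₀,
    fun δ hδ ↦ hΔ δ hδ.1, fun δ hδ ↦ ?_, hn₀, fun m hm v hv s hs hvs ↦ ?_⟩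
  · exact (div_le_iff₀ h1).2 (Metric.mem_ball.1 hδ.2).le
  · have heq : v = s := by
      by_contra hne
      linarith [hsep v (mem_biUnion (mem_Iio.2 hm) hv) s hs hne]
    exact ⟨by_contra fun hm0 ↦ hδ₀ ⟨m, hm0, s, hs, heq ▸ hv⟩, heq⟩

theorem dimH_setOf_isResonant_eq_zero (hlam : |lam| < 1) (hF : IsPiecewiseAffineOn lam F A X)
    (hX : Bornology.IsBounded X) (hΔ : ∀ δ ∈ Δ, MapsTo (perturb F δ) X X) :
    dimH {δ ∈ Δ | IsResonant lam F A X δ} = 0 := by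
  set R := {δ ∈ Δ | IsResonant lam F A X δ}
  set S := {δ | HasSingularConnection lam (digit lam F '' X) A δ}
  have hS : S.Countable := countable_setOf_hasSingularConnection hlam hF.finite_digits hF.finite
  suffices hle : ∀ d : ℝ≥0, 0 < d → dimH (R \ S) ≤ d by
    have hRS : dimH (R \ S) ≤ 0 :=
      ENNReal.le_of_forall_pos_le_add fun d hd _ ↦ (hle d hd).trans le_add_self
    refine le_antisymm ((dimH_mono (sdiff_subset_iff.1 (Subset.refl (R \ S)))).trans ?_) zero_le
    rw [dimH_union, hS.dimH_zero]
    exact max_le le_rfl hRS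
  intro d hd
  have hc : ‖lam‖₊ ^ (d : ℝ) < 1 := NNReal.rpow_lt_one hlam (by exact_mod_cast hd)
  obtain ⟨N, hN⟩ := exists_pow_lt_of_lt_one (show (0 : ℝ≥0) < 1 / 2 by positivity) hc
  have hN0 : N ≠ 0 := by
    rintro rfl
    exact absurd hN (by rw [pow_zero, not_lt]; exact NNReal.half_lt_self one_ne_zero |>.le)
  have hN2 : 2 * (‖lam‖₊ ^ (d : ℝ)) ^ N ≤ 1 := by
    simpa only [mul_comm] using ((lt_div_iff₀ two_pos).1 hN).le
  refine dimH_le_of_forall_exists_mem_nhdsWithin fun δ₀ hδ₀ ↦ ?_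
  obtain ⟨ε, hε, η, n₀, hW⟩ := exists_isSlowWindow hlam hF hΔ hδ₀.2 N
  refine ⟨_, ?_, hW.dimH_setOf_isResonant_le hlam hF hX hN0 hN2⟩
  filter_upwards [self_mem_nhdsWithin, nhdsWithin_le_nhds (Metric.ball_mem_nhds δ₀ hε)]
    with δ hδ hball
  exact ⟨⟨hδ.1.1, hball⟩, hδ.1.2⟩

end Dimension

/-- The first `n` letters determine the whole itinerary of a point of `X` under the parameter `δ`:
at time `n` all orbits are farther from `A` than the contracted size of `X`. -/
structure IsNonresonantAt (lam : ℝ) (F : ℝ → ℝ) (A X : Set ℝ) (δ : ℝ) (n : ℕ) : Prop where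
  mapsTo : MapsTo (perturb F δ) X X
  lt_abs_sub : ∀ w ∈ X, ∀ s ∈ A, |lam| ^ n * Metric.diam X < |orbitAt F (δ, w) n - s|

namespace IsNonresonantAt

variable {lam : ℝ} {F : ℝ → ℝ} {A X : Set ℝ} {δ w : ℝ} {n : ℕ}

lemma lt_abs_orbitAt_sub (hδ : IsNonresonantAt lam F A X δ n) (hw : w ∈ X) {i : ℕ} (hi : n ≤ i)
    {s : ℝ} (hs : s ∈ A) :
    |lam| ^ n * Metric.diam X < |orbitAt F (δ, w) i - s| := by
  simpa only [orbitAt_iterate, Nat.sub_add_cancel hi] using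
    hδ.lt_abs_sub _ (hδ.mapsTo.iterate (i - n) hw) s hs

lemma itinerary_eq_of_word_eq (hδ : IsNonresonantAt lam F A X δ n) (hlam : |lam| < 1)
    (hF : IsPiecewiseAffineOn lam F A X) (hX : Bornology.IsBounded X) {w' : ℝ} (hw : w ∈ X)
    (hw' : w' ∈ X) (h : word lam F n (δ, w) = word lam F n (δ, w')) :
    itinerary lam F (δ, w) = itinerary lam F (δ, w') := by
  funext i
  induction i using Nat.strong_induction_on with
  | _ i ih =>
    rcases lt_or_ge i n with hin | hni
    · exact word_eq_word_iff.1 h hin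
    by_contra hne
    obtain ⟨s, hs, hmem⟩ := hF.exists_mem_uIoc _ (orbitAt_mem hδ.mapsTo hw i) _
      (orbitAt_mem hδ.mapsTo hw' i) hne
    refine (hδ.lt_abs_orbitAt_sub hw hni hs).not_ge ?_
    calc |orbitAt F (δ, w) i - s| ≤ |orbitAt F (δ, w) i - orbitAt F (δ, w') i| :=
          abs_sub_le_of_mem_uIoc hmem
      _ = |lam| ^ i * |w - w'| := abs_orbitAt_sub_orbitAt ih
      _ ≤ |lam| ^ n * Metric.diam X := by
          gcongr ?_ * ?_
          · exact pow_le_pow_of_le_one (abs_nonneg lam) hlam.le hni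
          · exact Metric.dist_le_diam_of_mem hX hw hw'

lemma finite_periodicPts (hδ : IsNonresonantAt lam F A X δ n) (hlam : |lam| < 1)
    (hF : IsPiecewiseAffineOn lam F A X) (hX : Bornology.IsBounded X) :
    (X ∩ Function.periodicPts (perturb F δ)).Finite := by
  refine Set.Finite.of_injOn (f := fun w ↦ word lam F n (δ, w))
    (fun w hw ↦ mem_image_of_mem _ (mk_mem_prod (mem_singleton δ) hw.1)) ?_
    (hF.finite_words (by simpa using hδ.mapsTo) n)
  rintro w ⟨hw, p, hp, hwp⟩ w' ⟨hw', p', hp', hwp'⟩ hword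
  have hit := hδ.itinerary_eq_of_word_eq hlam hF hX hw hw' hword
  have hcontract : |w - w'| = |lam| ^ (p * p') * |w - w'| :=
    calc |w - w'| = |orbitAt F (δ, w) (p * p') - orbitAt F (δ, w') (p * p')| := by
          rw [orbitAt, orbitAt, hwp.mul_const p', hwp'.const_mul p]
      _ = |lam| ^ (p * p') * |w - w'| := abs_orbitAt_sub_orbitAt fun i _ ↦ congrFun hit i
  have hpow : |lam| ^ (p * p') < 1 :=
    pow_lt_one₀ (abs_nonneg lam) hlam (Nat.mul_pos hp hp').ne'
  rw [← sub_eq_zero, ← abs_eq_zero]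
  exact eq_zero_of_mul_eq_self_left hpow.ne hcontract.symm

lemma exists_itinerary_orbitAt_eq (hδ : IsNonresonantAt lam F A X δ n) (hlam : |lam| < 1)
    (hF : IsPiecewiseAffineOn lam F A X) (hX : Bornology.IsBounded X) (hw : w ∈ X) :
    ∃ i p, 0 < p ∧ itinerary lam F (δ, orbitAt F (δ, w) i) =
      itinerary lam F (δ, orbitAt F (δ, w) (i + p)) := by
  have hmem := orbitAt_mem (p := (δ, w)) hδ.mapsTo hw
  obtain ⟨i, i', hlt, heq⟩ := Set.Finite.exists_lt_map_eq_of_forall_mem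
    (t := words lam F {δ} X n) (f := fun i ↦ word lam F n (δ, orbitAt F (δ, w) i))
    (fun i ↦ mem_image_of_mem _ (mk_mem_prod (mem_singleton δ) (hmem i)))
    (hF.finite_words (by simpa using hδ.mapsTo) n)
  refine ⟨i, i' - i, Nat.sub_pos_of_lt hlt, ?_⟩
  rw [Nat.add_sub_cancel' hlt.le]
  exact hδ.itinerary_eq_of_word_eq hlam hF hX (hmem i) (hmem i') heq

lemma mem_diff_of_tendsto_orbitAt (hδ : IsNonresonantAt lam F A X δ n) (hlam0 : lam ≠ 0)
    (hX : IsCompact X) (hXnt : X.Nontrivial) (hw : w ∈ X) {y : ℝ} {k : ℕ → ℕ}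
    (hk : Tendsto k atTop atTop)
    (hy : Tendsto (fun m ↦ orbitAt F (δ, w) (k m)) atTop (𝓝 y)) : y ∈ X \ A := by
  refine ⟨hX.isClosed.mem_of_tendsto hy (Eventually.of_forall fun m ↦
    orbitAt_mem hδ.mapsTo hw (k m)), fun hyA ↦ ?_⟩
  have hdist : Tendsto (fun m ↦ |orbitAt F (δ, w) (k m) - y|) atTop (𝓝 0) := by
    simpa only [sub_self, abs_zero] using (hy.sub_const y).abs
  have hpos : 0 < |lam| ^ n * Metric.diam X :=
    mul_pos (pow_pos (abs_pos.2 hlam0) n) (Metric.diam_pos hXnt hX.isBounded)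
  refine hpos.not_ge (ge_of_tendsto hdist ?_)
  filter_upwards [hk.eventually_ge_atTop n] with m hm
  exact (hδ.lt_abs_orbitAt_sub hw hm hyA).le

lemma tendsto_orbitAt_add (hδ : IsNonresonantAt lam F A X δ n) (hlam0 : lam ≠ 0)
    (hF : IsPiecewiseAffineOn lam F A X) (hX : IsCompact X) (hXnt : X.Nontrivial) (hw : w ∈ X)
    {z : ℝ} {k : ℕ → ℕ} (hk : Tendsto k atTop atTop)
    (hz : Tendsto (fun m ↦ orbitAt F (δ, w) (k m)) atTop (𝓝 z)) (j : ℕ) :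
    Tendsto (fun m ↦ orbitAt F (δ, w) (k m + j)) atTop (𝓝 (orbitAt F (δ, z) j)) := by
  induction j with
  | zero => exact hz
  | succ j ih =>
    obtain ⟨hzX, hzA⟩ := hδ.mem_diff_of_tendsto_orbitAt hlam0 hX hXnt hw
      ((tendsto_add_atTop_nat j).comp hk) ih
    simp only [← add_assoc, orbitAt_succ]
    exact ((hF.continuousWithinAt hzX hzA).add_const δ).tendsto.comp
      (tendsto_nhdsWithin_iff.2 ⟨ih, Eventually.of_forall fun m ↦ orbitAt_mem hδ.mapsTo hw _⟩)

theorem exists_isPeriodicPt_tendsto (hδ : IsNonresonantAt lam F A X δ n) (hlam0 : lam ≠ 0)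
    (hlam : |lam| < 1) (hF : IsPiecewiseAffineOn lam F A X) (hX : IsCompact X)
    (hXnt : X.Nontrivial) (hw : w ∈ X) :
    ∃ z i p, 0 < p ∧ Function.IsPeriodicPt (perturb F δ) p z ∧
      ∀ j, orbitAt F (δ, z) j ∈ X \ A ∧
        Tendsto (fun m ↦ orbitAt F (δ, w) (i + (m * p + j))) atTop (𝓝 (orbitAt F (δ, z) j)) := by
  obtain ⟨i, p, hp, hit⟩ := hδ.exists_itinerary_orbitAt_eq hlam hF hX.isBounded hw
  have hu : orbitAt F (δ, w) i ∈ X := orbitAt_mem (p := (δ, w)) hδ.mapsTo hw i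
  have hshift (m : ℕ) : orbitAt F (δ, orbitAt F (δ, w) i) m = orbitAt F (δ, w) (i + m) :=
    orbitAt_iterate F δ w i m
  rw [← hshift] at hit
  obtain ⟨z, hz⟩ := exists_tendsto_orbitAt_mul hlam hp hit
  have hmul : Tendsto (fun m ↦ m * p) atTop atTop := by
    simpa only [add_zero, zero_add] using tendsto_add_mul_add_atTop hp 0 0
  have hlim := hδ.tendsto_orbitAt_add hlam0 hF hX hXnt hu hmul hz
  refine ⟨z, i, p, hp, ?_, fun j ↦ ⟨?_, ?_⟩⟩
  · refine tendsto_nhds_unique (hlim p) ?_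
    simpa only [Function.comp_def, Nat.succ_mul] using hz.comp (tendsto_add_atTop_nat 1)
  · exact hδ.mem_diff_of_tendsto_orbitAt hlam0 hX hXnt hu
      ((tendsto_add_atTop_nat j).comp hmul) (hlim j)
  · simpa only [hshift] using hlim j

end IsNonresonantAt

lemma exists_isNonresonantAt {lam : ℝ} {F : ℝ → ℝ} {A X : Set ℝ} {δ : ℝ}
    (hδ : MapsTo (perturb F δ) X X) (hres : ¬ IsResonant lam F A X δ) :
    ∃ n, IsNonresonantAt lam F A X δ n := by
  simp only [IsResonant] at hres
  push Not at hres
  exact hres.imp fun n hn ↦ ⟨hδ, hn⟩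

section Circle

variable {lam : ℝ} {f : ℝ → ℝ} {A X : Set ℝ} {δ : ℝ} {n : ℕ}

lemma semiconj_fract_perturb (f : ℝ → ℝ) (δ : ℝ) :
    Function.Semiconj Int.fract (perturb (f ∘ Int.fract) δ) fun x ↦ Int.fract (f x + δ) :=
  fun _ ↦ rfl

lemma setOf_periodic_subset_fract_image (hδ : MapsTo (perturb (f ∘ Int.fract) δ) X X)
    (hX : Ico 0 1 ⊆ X) :
    {x ∈ Ico (0 : ℝ) 1 | ∃ p, 1 ≤ p ∧ (fun x ↦ Int.fract (f x + δ))^[p] x = x} ⊆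
      Int.fract '' (X ∩ Function.periodicPts (perturb (f ∘ Int.fract) δ)) := by
  rintro x ⟨hx, p, hp, hxp⟩
  obtain ⟨q, rfl⟩ := Nat.exists_eq_add_of_le' hp
  have hfract : Int.fract x = x := Int.fract_eq_self.2 hx
  set u := (perturb (f ∘ Int.fract) δ)^[q + 1] x with hu
  have hux : Int.fract u = x := by
    rw [hu, ((semiconj_fract_perturb f δ).iterate_right (q + 1)).eq, hfract, hxp]
  have hstep : perturb (f ∘ Int.fract) δ u = perturb (f ∘ Int.fract) δ x := by
    simp only [perturb, Function.comp_apply, hux, hfract]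
  refine ⟨u, ⟨hδ.iterate (q + 1) (hX hx), q + 1, q.succ_pos, ?_⟩, hux⟩
  rw [Function.IsPeriodicPt, Function.IsFixedPt, Function.iterate_succ_apply, hstep,
    ← Function.iterate_succ_apply, ← hu]

lemma tendsto_iterate_fract {w z : ℝ} {k : ℕ → ℕ} {j : ℕ}
    (hz : orbitAt (f ∘ Int.fract) (δ, z) j ∉ range ((↑) : ℤ → ℝ))
    (hk : Tendsto (fun m ↦ orbitAt (f ∘ Int.fract) (δ, w) (k m)) atTop
      (𝓝 (orbitAt (f ∘ Int.fract) (δ, z) j))) :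
    Tendsto (fun m ↦ (fun x ↦ Int.fract (f x + δ))^[k m] (Int.fract w)) atTop
      (𝓝 ((fun x ↦ Int.fract (f x + δ))^[j] (Int.fract z))) := by
  have hiter (i : ℕ) (x : ℝ) : Int.fract (orbitAt (f ∘ Int.fract) (δ, x) i) =
      (fun x ↦ Int.fract (f x + δ))^[i] (Int.fract x) :=
    ((semiconj_fract_perturb f δ).iterate_right i).eq x
  simp only [← hiter]
  exact (continuousAt_fract fun h ↦ hz ⟨_, h.symm⟩).tendsto.comp hk

theorem IsNonresonantAt.asympPeriodicOn (hδ : IsNonresonantAt lam (f ∘ Int.fract) A X δ n)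
    (hlam0 : lam ≠ 0) (hlam : |lam| < 1) (hF : IsPiecewiseAffineOn lam (f ∘ Int.fract) A X)
    (hX : IsCompact X) (hIX : Ico 0 1 ⊆ X) (hA : X ∩ range ((↑) : ℤ → ℝ) ⊆ A) :
    AsympPeriodicOn (fun x ↦ Int.fract (f x + δ)) (Ico 0 1) := by
  refine ⟨((hδ.finite_periodicPts hlam hF hX.isBounded).image Int.fract).subset
    (setOf_periodic_subset_fract_image hδ.mapsTo hIX), fun w hw ↦ ?_⟩
  have hXnt : X.Nontrivial := (Ico_infinite zero_lt_one).nontrivial.mono hIX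
  obtain ⟨z, i, p, hp, hz, hlim⟩ :=
    hδ.exists_isPeriodicPt_tendsto hlam0 hlam hF hX hXnt (hIX hw)
  refine ⟨Int.fract z, p, hp, hz.map (semiconj_fract_perturb f δ),
    setOf_mapClusterPt_eq_range (i := i) (y := fun m ↦ (fun x ↦ Int.fract (f x + δ))^[m] w)
      (v := fun j ↦ (fun x ↦ Int.fract (f x + δ))^[j] (Int.fract z)) hp fun j ↦ ?_⟩
  simpa only [Int.fract_eq_self.2 hw] using
    tendsto_iterate_fract (fun hint ↦ (hlim j).1.2 (hA ⟨(hlim j).1.1, hint⟩)) (hlim j).2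

end Circle

lemma exists_mem_Ico_castSucc_succ {α : Type*} [LinearOrder α] {k : ℕ} {a : Fin (k + 1) → α} {x : α}
    (hx : x ∈ Ico (a 0) (a (Fin.last k))) : ∃ i : Fin k, x ∈ Ico (a i.castSucc) (a i.succ) := by
  by_contra! hout
  have hle (i : Fin (k + 1)) : a i ≤ x := by
    induction i using Fin.induction with
    | zero => exact hx.1
    | succ i ih => exact not_lt.1 fun hlt ↦ hout i ⟨ih, hlt⟩
  exact (hle (Fin.last k)).not_gt hx.2

/-- The lifts to the line of the partition points `a i` of the circle, truncated to translations by
the integers in `[-r, r]` so as to be finite in number while splitting all of `[-r, r]`. -/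
def breakpoints {k : ℕ} (a : Fin (k + 1) → ℝ) (r : ℕ) : Set ℝ :=
  image2 (fun i (m : ℤ) ↦ a i + m) univ (Icc (-r) r)

section Partition

variable {lam : ℝ} {k : ℕ} {a : Fin (k + 1) → ℝ} {b : Fin k → ℝ} {f : ℝ → ℝ}

lemma add_floor_mem_breakpoints (a : Fin (k + 1) → ℝ) {r : ℕ} {v : ℝ} (hv : v ∈ Icc (-(r : ℝ)) r)
    (i : Fin (k + 1)) : a i + ⌊v⌋ ∈ breakpoints a r :=
  mem_image2_of_mem (mem_univ i)
    ⟨Int.le_floor.2 (by simpa using hv.1), by exact_mod_cast (Int.floor_le v).trans hv.2⟩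

lemma inter_range_intCast_subset_breakpoints (ha0 : a 0 = 0) (r : ℕ) :
    Icc (-(r : ℝ)) r ∩ range ((↑) : ℤ → ℝ) ⊆ breakpoints a r := by
  rintro _ ⟨hm, m, rfl⟩
  simpa only [ha0, zero_add, Int.floor_intCast] using add_floor_mem_breakpoints a hm 0

variable (hf : ∀ i : Fin k, ∀ x ∈ Ico (a i.castSucc) (a i.succ), f x = lam * x + b i)
include hf

lemma digit_comp_fract {w : ℝ} {i : Fin k} (hi : Int.fract w ∈ Ico (a i.castSucc) (a i.succ)) :
    digit lam (f ∘ Int.fract) w = b i - lam * ⌊w⌋ := by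
  rw [digit, Function.comp_apply, hf i _ hi]
  linear_combination lam * Int.fract_add_floor w

variable (ha0 : a 0 = 0) (hak : a (Fin.last k) = 1)
include ha0 hak

lemma abs_le_one_add_sum_abs (hlam : |lam| ≤ 1) {x : ℝ} (hx : x ∈ Ico 0 1) :
    |f x| ≤ 1 + ∑ i, |b i| := by
  obtain ⟨i, hi⟩ := exists_mem_Ico_castSucc_succ (a := a) (by rwa [ha0, hak])
  rw [hf i x hi]
  refine (abs_add_le _ _).trans (add_le_add ?_ ?_)
  · rw [abs_mul]
    exact mul_le_one₀ hlam (abs_nonneg x) (by rw [abs_of_nonneg hx.1]; exact hx.2.le)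
  · exact Finset.single_le_sum (f := fun i ↦ |b i|) (fun _ _ ↦ abs_nonneg _) (Finset.mem_univ i)

lemma mapsTo_perturb_comp_fract (hlam : |lam| ≤ 1) {δ r : ℝ} (hδ : 1 + ∑ i, |b i| + |δ| ≤ r) :
    MapsTo (perturb (f ∘ Int.fract) δ) univ (Icc (-r) r) := fun w _ ↦
  abs_le.1 <|
    calc |f (Int.fract w) + δ| ≤ |f (Int.fract w)| + |δ| := abs_add_le _ _
      _ ≤ 1 + ∑ i, |b i| + |δ| := by
          gcongr
          exact abs_le_one_add_sum_abs hf ha0 hak hlam ⟨Int.fract_nonneg w, Int.fract_lt_one w⟩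
      _ ≤ r := hδ

lemma exists_mem_breakpoints_of_digit_ne {r : ℕ} {u v : ℝ} (hv : v ∈ Icc (-(r : ℝ)) r)
    (huv : u ≤ v) (hne : digit lam (f ∘ Int.fract) u ≠ digit lam (f ∘ Int.fract) v) :
    ∃ s ∈ breakpoints a r, s ∈ Ioc u v := by
  obtain ⟨i, hi⟩ := exists_mem_Ico_castSucc_succ (a := a) (x := Int.fract v)
    (by rw [ha0, hak]; exact ⟨Int.fract_nonneg v, Int.fract_lt_one v⟩)
  have hvfloor := Int.fract_add_floor v
  by_contra! hnot
  have hle {j : Fin (k + 1)} (hj : a j ≤ Int.fract v) : a j + ⌊v⌋ ≤ u :=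
    not_lt.1 fun hlt ↦ hnot _ (add_floor_mem_breakpoints a hv j) ⟨hlt, by linarith⟩
  have hfloor : ⌊u⌋ = ⌊v⌋ := by
    refine le_antisymm (Int.floor_mono huv) (Int.le_floor.2 ?_)
    simpa only [ha0, zero_add] using hle (j := 0) (ha0.trans_le (Int.fract_nonneg v))
  have hui : Int.fract u ∈ Ico (a i.castSucc) (a i.succ) := by
    rw [Int.fract, hfloor]
    exact ⟨le_sub_iff_add_le.2 (hle hi.1), by linarith [hi.2]⟩
  exact hne (by rw [digit_comp_fract hf hui, digit_comp_fract hf hi, hfloor])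

lemma isPiecewiseAffineOn_comp_fract (r : ℕ) :
    IsPiecewiseAffineOn lam (f ∘ Int.fract) (breakpoints a r) (Icc (-r) r) where
  finite := finite_univ.image2 _ (finite_Icc _ _)
  exists_mem_uIoc u hu v hv hne := by
    rcases le_total u v with huv | hvu
    · simpa only [uIoc_of_le huv] using
        exists_mem_breakpoints_of_digit_ne hf ha0 hak hv huv hne
    · simpa only [uIoc_of_ge hvu] using
        exists_mem_breakpoints_of_digit_ne hf ha0 hak hu hvu hne.symm

lemma asympPeriodicOn_of_not_isResonant (hlam0 : lam ≠ 0) (hlam : |lam| < 1) {δ : ℝ} {r : ℕ}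
    (hδ : 1 + ∑ i, |b i| + |δ| ≤ r)
    (hres : ¬ IsResonant lam (f ∘ Int.fract) (breakpoints a r) (Icc (-r) r) δ) :
    AsympPeriodicOn (fun x ↦ Int.fract (f x + δ)) (Ico 0 1) := by
  obtain ⟨n, hn⟩ := exists_isNonresonantAt
    ((mapsTo_perturb_comp_fract hf ha0 hak hlam.le hδ).mono_left (subset_univ _)) hres
  have hr : (1 : ℝ) ≤ r := by
    linarith [abs_nonneg δ, Finset.univ.sum_nonneg fun i _ ↦ abs_nonneg (b i)]
  exact hn.asympPeriodicOn hlam0 hlam (isPiecewiseAffineOn_comp_fract hf ha0 hak r) isCompact_Icc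
    (Ico_subset_Icc_self.trans (Icc_subset_Icc (by linarith) hr))
    (inter_range_intCast_subset_breakpoints ha0 r)

end Partition

theorem stmt19_general (lam : ℝ) (hlam0 : lam ≠ 0) (hlam : |lam| < 1) (k : ℕ)
    (a : Fin (k + 1) → ℝ) (ha0 : a 0 = 0) (hak : a (Fin.last k) = 1) (b : Fin k → ℝ) (f : ℝ → ℝ)
    (hf : ∀ i : Fin k, ∀ x ∈ Ico (a i.castSucc) (a i.succ), f x = lam * x + b i) :
    dimH {δ : ℝ | ¬ AsympPeriodicOn (fun x ↦ Int.fract (f x + δ)) (Ico 0 1)} = 0 := by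
  let Δ (r : ℕ) : Set ℝ := {δ | 1 + ∑ i, |b i| + |δ| ≤ r}
  have hzero (r : ℕ) :
      dimH {δ ∈ Δ r | IsResonant lam (f ∘ Int.fract) (breakpoints a r) (Icc (-r) r) δ} = 0 :=
    dimH_setOf_isResonant_eq_zero hlam (isPiecewiseAffineOn_comp_fract hf ha0 hak r)
      isCompact_Icc.isBounded fun _ hδ ↦
        (mapsTo_perturb_comp_fract hf ha0 hak hlam.le hδ).mono_left (subset_univ _)
  refine le_antisymm ((dimH_mono fun δ hδ ↦ ?_).trans
    ((dimH_iUnion _).trans_le (iSup_le fun r ↦ (hzero r).le))) zero_le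
  obtain ⟨r, hr⟩ := exists_nat_ge (1 + ∑ i, |b i| + |δ|)
  exact mem_iUnion.2 ⟨r, hr, by_contra fun hres ↦
    hδ (asympPeriodicOn_of_not_isResonant hf ha0 hak hlam0 hlam hr hres)⟩

/-- Theorem A -/
theorem stmt19 (lam : ℝ) (hlam0 : lam ≠ 0) (hlam : |lam| < 1)
    (k : ℕ) (hk : 1 ≤ k) (a : Fin (k+1) → ℝ) (ha : StrictMono a)
    (ha0 : a 0 = 0) (hak : a (Fin.last k) = 1) (b : Fin k → ℝ) (f : ℝ → ℝ)
    (hf : ∀ i : Fin k, ∀ x ∈ Set.Ico (a i.castSucc) (a i.succ), f x = lam * x + b i)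
    (hmaps : Set.MapsTo f (Set.Ico 0 1) (Set.Ico 0 1)) :
    dimH {δ : ℝ |
      ¬ AsympPeriodicOn (fun x => Int.fract (f x + δ)) (Set.Ico (0:ℝ) 1)} = 0 :=
  stmt19_general lam hlam0 hlam k a ha0 hak b f hf
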